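/- There are exactly 28 smooth cubic forms f over 𝔽₂ in four variables that vanish at every point of 𝔽₂⁴ (where smooth means that over an algebraic closure K of 𝔽₂, the only common zero in K⁴ of f and its four partial derivatives is the origin); equivalently, the orbit of c₀ = x²t + y²z + yz² + xt² under the linear-substitution action of GL₄(𝔽₂) consists of exactly 28 cubic forms. -/

import Mathlib

open MvPolynomial

noncomputable section

/-- The field with two elements. -/
abbrev F2 : Type := ZMod 2

/-- An algebraic closure of `F2`. -/
abbrev Kbar : Type := AlgebraicClosure F2

/-- Linear substitution action of a matrix `g` on a polynomial `f`:
`(act g f)(x) = f (g * x)`, i.e. the variable `X i` is replaced by `∑ j, g i j • X j`. -/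
def act (g : Matrix (Fin 4) (Fin 4) F2) (f : MvPolynomial (Fin 4) F2) :
    MvPolynomial (Fin 4) F2 :=
  aeval (fun i => ∑ j, g i j • X j) f

lemma act_one (f : MvPolynomial (Fin 4) F2) : act 1 f = f := by
  have h : (fun i => ∑ j, (1 : Matrix (Fin 4) (Fin 4) F2) i j • (X j : MvPolynomial (Fin 4) F2))
      = X := by
    funext i
    simp [Matrix.one_apply, ite_smul]
  simp [act, h]

lemma act_act (g h : Matrix (Fin 4) (Fin 4) F2) (f : MvPolynomial (Fin 4) F2) :
    act g (act h f) = act (h * g) f := by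
  show (aeval _) ((aeval _) f) = _
  rw [← AlgHom.comp_apply, comp_aeval]
  have key : (fun i => (aeval fun i => ∑ j, g i j • (X j : MvPolynomial (Fin 4) F2))
        (∑ j, h i j • (X j : MvPolynomial (Fin 4) F2)))
      = fun i => ∑ j, (h * g) i j • (X j : MvPolynomial (Fin 4) F2) := by
    funext i
    simp only [map_sum, map_smul, aeval_X, Matrix.mul_apply, Finset.smul_sum, smul_smul,
      Finset.sum_smul]
    rw [Finset.sum_comm]
  rw [key]
  rfl

/-- The stabilizer of a polynomial `f` under the linear-substitution action of `GL₄(𝔽₂)`. -/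
def stab (f : MvPolynomial (Fin 4) F2) : Subgroup (GL (Fin 4) F2) where
  carrier := {g | act (g : Matrix (Fin 4) (Fin 4) F2) f = f}
  one_mem' := by simpa using act_one f
  mul_mem' := by
    intro a b ha hb
    simp only [Set.mem_setOf_eq] at *
    have : act ((↑(a * b) : Matrix (Fin 4) (Fin 4) F2)) f = act ↑b (act ↑a f) := by
      rw [act_act]; rfl
    rw [this, ha, hb]
  inv_mem' := by
    intro a ha
    simp only [Set.mem_setOf_eq] at *
    have h2 := congrArg (act ((↑(a⁻¹) : Matrix (Fin 4) (Fin 4) F2))) ha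
    rw [act_act] at h2
    rw [Units.mul_inv, act_one] at h2
    exact h2.symm

/-- A smooth cubic form over `𝔽₂`: homogeneous of degree `3`, such that over an algebraic
closure the only common zero of `f` and its four partial derivatives is the origin. -/
def IsSmoothCubic (f : MvPolynomial (Fin 4) F2) : Prop :=
  f.IsHomogeneous 3 ∧
    ∀ v : Fin 4 → Kbar,
      eval v (map (algebraMap F2 Kbar) f) = 0 →
      (∀ i : Fin 4, eval v (map (algebraMap F2 Kbar) (pderiv i f)) = 0) →
      v = 0

/-- The cubic form `x²t + y²z + yz² + xt²`. -/
def c0 : MvPolynomial (Fin 4) F2 :=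
  X 0 ^ 2 * X 3 + X 1 ^ 2 * X 2 + X 1 * X 2 ^ 2 + X 0 * X 3 ^ 2

/-!
Over a field with `q` elements, a form of degree `q + 1` that vanishes at all rational points has no
monomials `x_i ^ (q + 1)`. Replacing its monomials `x_i x_j ^ q` by `x_i x_j` does not change its
values at rational points and leaves a polynomial of degree less than `q` in each variable, which is
therefore zero. So these forms are exactly `xᵀ A x^[q]` with `A` alternating. The gradient of such a
form is `A x^[q]`, so it is smooth precisely when `A` is invertible, and a linear substitution `g`
acts by `A ↦ gᵀ A g`. A symplectic basis shows that the invertible alternating `4 × 4` matrices form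
one congruence class, which contains the matrix of `c₀`. Over `𝔽₂` they are the vectors of `𝔽₂⁶` on
which the Pfaffian, a hyperbolic quadratic form, does not vanish; there are `2⁵ - 2² = 28` of them.
-/

open Matrix hiding single
open Finsupp (single)

section FrobeniusForm

variable {σ R : Type*} [Fintype σ] [CommSemiring R] {q : ℕ}

/-- The Frobenius form `xᵀ A x^[q] = ∑ i j, A i j • x_i x_j ^ q` of degree `q + 1` with Gram
matrix `A`, in the variables indexed by `σ`. -/
def frobeniusForm (q : ℕ) (A : Matrix σ σ R) : MvPolynomial σ R :=
  X ⬝ᵥ A.map C *ᵥ X ^ q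

/-- The matrix of coefficients of the monomials `x_i x_j ^ q` in `f`, which recovers `A` from
`frobeniusForm q A` when `1 < q`. For `q = 1` it is not a Gram matrix: the monomials `x_i x_j` and
`x_j x_i` coincide. -/
def frobeniusGram (q : ℕ) (f : MvPolynomial σ R) : Matrix σ σ R :=
  Matrix.of fun i j => coeff (single i 1 + single j q) f

lemma aeval_frobeniusForm {S : Type*} [CommSemiring S] [Algebra R S] (y : σ → S)
    (A : Matrix σ σ R) :
    aeval y (frobeniusForm q A) = y ⬝ᵥ A.map (algebraMap R S) *ᵥ y ^ q := by
  simp [frobeniusForm, dotProduct, mulVec]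

lemma eval_frobeniusForm (v : σ → R) (A : Matrix σ σ R) :
    eval v (frobeniusForm q A) = v ⬝ᵥ A *ᵥ v ^ q := by
  simpa [aeval_eq_eval] using aeval_frobeniusForm v A

lemma frobeniusForm_eq_sum_monomial (A : Matrix σ σ R) :
    frobeniusForm q A = ∑ i, ∑ j, monomial (single i 1 + single j q) (A i j) := by
  refine Finset.sum_congr rfl fun i _ => ?_
  rw [mulVec, dotProduct, Finset.mul_sum]
  refine Finset.sum_congr rfl fun j _ => ?_
  rw [monomial_single_add, pow_one, ← C_mul_X_pow_eq_monomial]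
  rfl

lemma isHomogeneous_frobeniusForm (A : Matrix σ σ R) :
    (frobeniusForm q A).IsHomogeneous (q + 1) := by
  rw [frobeniusForm_eq_sum_monomial]
  refine IsHomogeneous.sum _ _ _ fun i _ => IsHomogeneous.sum _ _ _ fun j _ =>
    isHomogeneous_monomial _ ?_
  rw [map_add, Finsupp.degree_single, Finsupp.degree_single, add_comm]

lemma coeff_frobeniusForm (hq : 1 < q) (A : Matrix σ σ R) (i j : σ) :
    coeff (single i 1 + single j q) (frobeniusForm q A) = A i j := by
  classical
  have exponent_inj (k l : σ) :
      (single k 1 + single l q : σ →₀ ℕ) = single i 1 + single j q ↔ k = i ∧ l = j := by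
    rw [Finsupp.single_add_single_eq_single_add_single one_ne_zero (by lia)]
    lia
  simp only [frobeniusForm_eq_sum_monomial, coeff_sum, coeff_monomial, exponent_inj, ite_and]
  simp

lemma frobeniusForm_injective (hq : 1 < q) :
    Function.Injective (frobeniusForm q : Matrix σ σ R → MvPolynomial σ R) := fun A B h => by
  ext i j
  rw [← coeff_frobeniusForm hq A, h, coeff_frobeniusForm hq]

lemma pderiv_frobeniusForm (hq : (q : R) = 0) (A : Matrix σ σ R) (i : σ) :
    pderiv i (frobeniusForm q A) = (A.map C *ᵥ X ^ q) i := by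
  classical
  have pderiv_pow_eq_zero (j : σ) : pderiv i (X j ^ q : MvPolynomial σ R) = 0 := by
    rw [pderiv_pow, ← map_natCast (C : R →+* MvPolynomial σ R), hq]
    simp
  simp [frobeniusForm, dotProduct, mulVec, pderiv_pow_eq_zero, pderiv_X,
    Pi.single_apply]

end FrobeniusForm

section Vanishing

variable {σ R K : Type*} [CommSemiring R]

lemma eval_single_one_of_isHomogeneous [DecidableEq σ] {n : ℕ} {f : MvPolynomial σ R}
    (hf : f.IsHomogeneous n) (i : σ) : eval (Pi.single i 1) f = coeff (single i n) f := by
  rw [eval_eq, Finset.sum_eq_single (single i n)]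
  · rw [Finset.prod_eq_one, mul_one]
    intro k hk
    obtain rfl : k = i := Finset.mem_singleton.mp (Finsupp.support_single_subset hk)
    rw [Pi.single_eq_same, one_pow]
  · intro d hd hne
    obtain ⟨k, hk, hki⟩ : ∃ k ∈ d.support, k ≠ i := by
      by_contra! h
      have d_eq : d = single i (d i) :=
        Finsupp.support_subset_singleton.mp fun k hk => Finset.mem_singleton.mpr (h k hk)
      have degree_d : d.degree = n := by
        rw [Finsupp.degree_eq_weight_one]
        exact hf (mem_support_iff.mp hd)
      rw [d_eq, Finsupp.degree_single] at degree_d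
      exact hne (degree_d ▸ d_eq)
    rw [Finset.prod_eq_zero hk, mul_zero]
    rw [Pi.single_eq_of_ne hki, zero_pow (Finsupp.mem_support_iff.mp hk)]
  · intro h
    rw [notMem_support_iff.mp h, zero_mul]

lemma exists_eq_single_add_single {n : ℕ} {d : σ →₀ ℕ} (hd : d.degree = n + 1) {j : σ}
    (hj : n ≤ d j) : ∃ i, d = single i 1 + single j n := by
  have split : d - single j n + single j n = d :=
    tsub_add_cancel_of_le (Finsupp.single_le_iff.mpr hj)
  have degree_sub : (d - single j n).degree = 1 := by
    have := congrArg Finsupp.degree split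
    rw [map_add, Finsupp.degree_single, hd] at this
    lia
  obtain ⟨i, hi⟩ := (Finsupp.sum_eq_one_iff _).mp degree_sub
  exact ⟨i, by rw [← hi, split]⟩

variable [Fintype σ]

lemma degreeOf_sub_frobeniusForm_lt {R : Type*} [CommRing R] {q : ℕ} (hq : 1 < q)
    {f : MvPolynomial σ R} (hf : f.IsHomogeneous (q + 1)) (j : σ) :
    degreeOf j (f - frobeniusForm q (frobeniusGram q f)) < q := by
  rw [degreeOf_lt_iff (by lia)]
  intro d hd
  by_contra! hj
  have degree_d : d.degree = q + 1 := by
    rw [Finsupp.degree_eq_weight_one]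
    exact (hf.sub (isHomogeneous_frobeniusForm _)) (mem_support_iff.mp hd)
  obtain ⟨i, rfl⟩ := exists_eq_single_add_single degree_d hj
  rw [mem_support_iff, coeff_sub, coeff_frobeniusForm hq] at hd
  exact hd (sub_self _)

lemma degreeOf_frobeniusForm_one_le {A : Matrix σ σ R} (hA : ∀ i, A i i = 0) (k : σ) :
    degreeOf k (frobeniusForm 1 A) ≤ 1 := by
  rw [frobeniusForm_eq_sum_monomial]
  refine (degreeOf_sum_le ..).trans <| Finset.sup_le fun i _ =>
    (degreeOf_sum_le ..).trans <| Finset.sup_le fun j _ => ?_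
  rcases eq_or_ne i j with rfl | hij
  · rw [hA, monomial_zero, degreeOf_zero]
    exact zero_le_one
  · classical
    refine degreeOf_le_iff.mpr fun d hd => ?_
    obtain rfl := Finset.mem_singleton.mp (support_monomial_subset hd)
    simp only [Finsupp.add_apply, Finsupp.single_apply]
    grind

variable [Field K] [Fintype K]

local notation "q" => Fintype.card K

lemma eval_frobeniusForm_card (A : Matrix σ σ K) (v : σ → K) :
    eval v (frobeniusForm q A) = v ⬝ᵥ A *ᵥ v := by
  rw [eval_frobeniusForm, show v ^ q = v from funext fun i => FiniteField.pow_card (v i)]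

theorem frobeniusForm_frobeniusGram {f : MvPolynomial σ K} (hf : f.IsHomogeneous (q + 1))
    (hv : ∀ v : σ → K, eval v f = 0) : frobeniusForm q (frobeniusGram q f) = f := by
  classical
  let A := frobeniusGram q f
  have one_lt_q : 1 < q := Fintype.one_lt_card
  have A_diag (i : σ) : A i i = 0 := by
    rw [← hv (Pi.single i 1), eval_single_one_of_isHomogeneous hf, add_comm q 1, Finsupp.single_add]
    rfl
  have rest_homogeneous : (f - frobeniusForm q A).IsHomogeneous (q + 1) :=
    hf.sub (isHomogeneous_frobeniusForm A)
  have degreeOf_lt (j : σ) : degreeOf j (f - frobeniusForm q A + frobeniusForm 1 A) < q :=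
    (degreeOf_add_le ..).trans_lt <| max_lt (degreeOf_sub_frobeniusForm_lt one_lt_q hf j) <|
      (degreeOf_frobeniusForm_one_le A_diag j).trans_lt one_lt_q
  -- `x_i x_j ^ q` and `x_i x_j` agree at rational points, and a polynomial of degree less than `q`
  -- in each variable is determined by its values there.
  have rest_eq : f - frobeniusForm q A = -frobeniusForm 1 A := by
    refine eq_neg_of_add_eq_zero_left <|
      eq_zero_of_eval_zero_at_prod_finset _ (fun _ => Finset.univ) degreeOf_lt fun v _ => ?_
    rw [map_add, map_sub, hv, eval_frobeniusForm_card, eval_frobeniusForm, pow_one]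
    ring
  by_contra hne
  have degree_eq : q + 1 = 1 + 1 := rest_homogeneous.inj_right
    (rest_eq ▸ (isHomogeneous_frobeniusForm A).neg) (sub_ne_zero_of_ne (Ne.symm hne))
  lia

theorem forall_eval_eq_zero_iff [DecidableEq σ] {f : MvPolynomial σ K}
    (hf : f.IsHomogeneous (q + 1)) :
    (∀ v : σ → K, eval v f = 0) ↔
      ∃ A : Matrix σ σ K, (toBilin' A).IsAlt ∧ frobeniusForm q A = f := by
  simp only [LinearMap.BilinForm.IsAlt, LinearMap.IsAlt, toBilin'_apply']
  constructor
  · intro hv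
    have f_eq := frobeniusForm_frobeniusGram hf hv
    exact ⟨_, fun v => by rw [← eval_frobeniusForm_card, f_eq, hv], f_eq⟩
  · rintro ⟨A, hA, rfl⟩ v
    rw [eval_frobeniusForm_card, hA]

theorem frobeniusForm_smooth_iff [DecidableEq σ] (L : Type*) [Field L] [Algebra K L]
    (A : Matrix σ σ K) :
    (∀ v : σ → L, eval v (map (algebraMap K L) (frobeniusForm q A)) = 0 →
      (∀ i, eval v (map (algebraMap K L) (pderiv i (frobeniusForm q A))) = 0) → v = 0) ↔
      A.det ≠ 0 := by
  have gradient (v : σ → L) (i : σ) :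
      eval v (map (algebraMap K L) (pderiv i (frobeniusForm q A))) =
        (A.map (algebraMap K L) *ᵥ v ^ q) i := by
    rw [eval_map, ← aeval_def, pderiv_frobeniusForm (FiniteField.cast_card_eq_zero K)]
    simp [mulVec, dotProduct]
  have value (v : σ → L) : eval v (map (algebraMap K L) (frobeniusForm q A)) =
      v ⬝ᵥ A.map (algebraMap K L) *ᵥ v ^ q := by
    rw [eval_map, ← aeval_def, aeval_frobeniusForm]
  simp only [gradient, value]
  constructor
  · intro h hdet
    obtain ⟨w, hw, hAw⟩ := exists_mulVec_eq_zero_iff.mpr hdet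
    have pow_w : (algebraMap K L ∘ w) ^ q = algebraMap K L ∘ w := by
      ext1 i
      simp [← map_pow, FiniteField.pow_card]
    have gradient_w (i : σ) : (A.map (algebraMap K L) *ᵥ (algebraMap K L ∘ w) ^ q) i = 0 := by
      rw [pow_w, ← RingHom.map_mulVec, hAw, Pi.zero_apply, map_zero]
    have image_w := h _ (by simp only [dotProduct, gradient_w, mul_zero, Finset.sum_const_zero])
      gradient_w
    exact hw (funext fun i => (algebraMap K L).injective (by simpa using congrFun image_w i))
  · intro hdet v _ hv
    have det_map_ne_zero : (A.map (algebraMap K L)).det ≠ 0 := by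
      rw [← RingHom.mapMatrix_apply, ← RingHom.map_det]
      simpa using hdet
    have pow_v := eq_zero_of_mulVec_eq_zero det_map_ne_zero (funext hv)
    exact funext fun i => eq_zero_of_pow_eq_zero (congrFun pow_v i)

theorem aeval_mulVec_X_frobeniusForm {τ : Type*} [Fintype τ] (g : Matrix σ τ K)
    (A : Matrix σ σ K) :
    aeval (fun i => ∑ j, g i j • (X j : MvPolynomial τ K)) (frobeniusForm q A) =
      frobeniusForm q (gᵀ * A * g) := by
  have frobenius_linear : (g.map C *ᵥ X : σ → MvPolynomial τ K) ^ q = g.map C *ᵥ X ^ q := by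
    ext1 i
    change FiniteField.frobeniusAlgHom K (MvPolynomial τ K) (∑ j, C (g i j) * X j) =
      ∑ j, C (g i j) * X j ^ q
    simp only [← smul_eq_C_mul, map_sum, map_smul, FiniteField.coe_frobeniusAlgHom]
  calc aeval (fun i => ∑ j, g i j • (X j : MvPolynomial τ K)) (frobeniusForm q A)
      = (g.map C *ᵥ X) ⬝ᵥ A.map C *ᵥ (g.map C *ᵥ X) ^ q := by
        rw [aeval_frobeniusForm]
        simp only [smul_eq_C_mul]
        rfl
    _ = X ⬝ᵥ (gᵀ * A * g).map C *ᵥ X ^ q := by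
        rw [frobenius_linear, Matrix.map_mul, Matrix.map_mul, transpose_map, ← mulVec_mulVec,
          ← mulVec_mulVec, dotProduct_mulVec X, vecMul_transpose]

end Vanishing

section Alternating

open LinearMap (BilinForm)

variable {R K V : Type*} [CommRing R] [Field K] [AddCommGroup V] [Module K V]

lemma exists_apply_eq_one_of_separatingLeft {B : BilinForm K V} (hB : B.SeparatingLeft) {v : V}
    (hv : v ≠ 0) : ∃ w, B v w = 1 := by
  obtain ⟨u, hu⟩ : ∃ u, B v u ≠ 0 := by
    by_contra! h
    exact hv (hB v h)
  exact ⟨(B v u)⁻¹ • u, by simp [hu]⟩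

lemma exists_orthogonal_hyperbolic_pair {B : BilinForm K V} (hB : B.SeparatingLeft)
    (hAlt : B.IsAlt) (hV : 2 < Module.finrank K V) {v w : V} (hvw : B v w = 1) :
    ∃ v' w', B v' w' = 1 ∧ B v v' = 0 ∧ B v w' = 0 ∧ B v' w = 0 ∧ B w' w = 0 := by
  have : FiniteDimensional K V := Module.finite_of_finrank_pos (by lia)
  obtain ⟨v', hv', hne⟩ := (Submodule.ne_bot_iff _).mp <|
    LinearMap.ker_ne_bot_of_finrank_lt (f := (B v).prod (B w)) (by simpa using hV)
  obtain ⟨hvv', hwv'⟩ : B v v' = 0 ∧ B w v' = 0 := by simpa using hv'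
  obtain ⟨u, hu⟩ := exists_apply_eq_one_of_separatingLeft hB hne
  have hwv : B w v = -1 := by rw [← hAlt.neg_eq, hvw]
  have hv'v : B v' v = 0 := hAlt.isRefl _ _ hvv'
  have hv'w : B v' w = 0 := hAlt.isRefl _ _ hwv'
  exact ⟨v', u - B v u • w + B w u • v,
    by simp [hu, hv'v, hv'w], hvv', by simp [hvw, hAlt.self_eq_zero], hv'w,
    hAlt.isRefl _ _ (by simp [hwv, hAlt.self_eq_zero])⟩

/-- The alternating `4 × 4` matrix with entries `p` above the diagonal, read row by row. -/
def altMatrix (p : Fin 6 → R) : Matrix (Fin 4) (Fin 4) R :=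
  !![    0,   p 0,   p 1, p 2;
      -p 0,     0,   p 3, p 4;
      -p 1,  -p 3,     0, p 5;
      -p 2,  -p 4,  -p 5,   0]

/-- The Pfaffian of `altMatrix p`. -/
def pfaffian (p : Fin 6 → R) : R :=
  p 0 * p 5 - p 1 * p 4 + p 2 * p 3

lemma det_altMatrix (p : Fin 6 → R) : (altMatrix p).det = pfaffian p ^ 2 := by
  simp [altMatrix, pfaffian, det_succ_row_zero, Fin.sum_univ_succ, Fin.succAbove]
  ring

lemma altMatrix_injective : Function.Injective (altMatrix : (Fin 6 → R) → _) := fun p p' h => by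
  simp only [altMatrix, EmbeddingLike.apply_eq_iff_eq, vecCons_inj] at h
  ext i
  fin_cases i <;> simp_all

lemma isAlt_toBilin'_iff {A : Matrix (Fin 4) (Fin 4) R} :
    (toBilin' A).IsAlt ↔ altMatrix ![A 0 1, A 0 2, A 0 3, A 1 2, A 1 3, A 2 3] = A := by
  constructor
  · intro hA
    have diag (i : Fin 4) : 0 = A i i := by
      simpa using (hA.self_eq_zero (Pi.single i 1)).symm
    have skew (i j : Fin 4) : -A i j = A j i := by
      simpa using hA.neg_eq (Pi.single i 1) (Pi.single j 1)
    ext i j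
    fin_cases i <;> fin_cases j <;> first | exact diag _ | rfl | exact skew _ _
  · intro hA v
    rw [← hA, toBilin'_apply']
    simp only [dotProduct, mulVec, altMatrix, cons_val_zero, cons_val_one, cons_val, of_apply,
      cons_val', cons_val_fin_one, Fin.sum_univ_four, zero_mul, zero_add, neg_mul, add_zero]
    ring

/-- The Gram matrix of a symplectic basis `v₁, v₂, w₂, w₁` with `B v₁ w₁ = B v₂ w₂ = 1`. -/
def symplecticMatrix : Matrix (Fin 4) (Fin 4) R :=
  altMatrix ![0, 0, 1, 1, 0, 0]

lemma exists_gram_eq_symplecticMatrix {A : Matrix (Fin 4) (Fin 4) K} (hA : (toBilin' A).IsAlt)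
    (hdet : A.det ≠ 0) : ∃ g : Matrix (Fin 4) (Fin 4) K, gᵀ * A * g = symplecticMatrix := by
  have hB := (BilinForm.nondegenerate_toBilin'_of_det_ne_zero' A hdet).1
  obtain ⟨v₁, hv₁⟩ := exists_ne (0 : Fin 4 → K)
  obtain ⟨w₁, hvw₁⟩ := exists_apply_eq_one_of_separatingLeft hB hv₁
  obtain ⟨v₂, w₂, hvw₂, h₁, h₂, h₃, h₄⟩ :=
    exists_orthogonal_hyperbolic_pair hB hA (by simp) hvw₁
  let g : Matrix (Fin 4) (Fin 4) K := (Matrix.of ![v₁, v₂, w₂, w₁])ᵀ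
  have gram (i j : Fin 4) : (gᵀ * A * g) i j = toBilin' A (g.col i) (g.col j) := by
    rw [toBilin'_apply', Matrix.mul_assoc]
    rfl
  have isAlt_gram : (toBilin' (gᵀ * A * g)).IsAlt := by
    rw [← toBilin'_comp]
    exact fun v => hA _
  refine ⟨g, ?_⟩
  rw [← isAlt_toBilin'_iff.mp isAlt_gram, symplecticMatrix]
  simp only [gram]
  have entries : ![toBilin' A v₁ v₂, toBilin' A v₁ w₂, toBilin' A v₁ w₁, toBilin' A v₂ w₂,
      toBilin' A v₂ w₁, toBilin' A w₂ w₁] = ![0, 0, 1, 1, 0, 0] := by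
    rw [h₁, h₂, hvw₁, hvw₂, h₃, h₄]
  exact congrArg altMatrix entries

theorem isAlt_and_det_ne_zero_iff {A : Matrix (Fin 4) (Fin 4) K} :
    (toBilin' A).IsAlt ∧ A.det ≠ 0 ↔
      ∃ g : GL (Fin 4) K, g.valᵀ * symplecticMatrix * g.val = A := by
  have det_symplecticMatrix : (symplecticMatrix : Matrix (Fin 4) (Fin 4) K).det = 1 := by
    simp [symplecticMatrix, det_altMatrix, pfaffian]
  constructor
  · rintro ⟨hA, hdet⟩
    obtain ⟨h, hh⟩ := exists_gram_eq_symplecticMatrix hA hdet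
    have det_h : h.det ≠ 0 := by
      intro h0
      simpa [h0, det_symplecticMatrix] using congrArg det hh
    obtain ⟨g, rfl⟩ : IsUnit h := (isUnit_iff_isUnit_det h).mpr det_h.isUnit
    refine ⟨g⁻¹, ?_⟩
    calc ((g⁻¹ : GL (Fin 4) K) : Matrix _ _ K)ᵀ * symplecticMatrix * ↑g⁻¹
        = (↑g * ↑g⁻¹ : Matrix _ _ K)ᵀ * A * (↑g * ↑g⁻¹) := by
          simp only [← hh, transpose_mul, Matrix.mul_assoc]
      _ = A := by rw [Units.mul_inv, transpose_one, Matrix.one_mul, Matrix.mul_one]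
  · rintro ⟨g, rfl⟩
    refine ⟨?_, ?_⟩
    · rw [← toBilin'_comp]
      exact fun v => isAlt_toBilin'_iff.mpr rfl _
    · simpa [det_symplecticMatrix] using g.det_ne_zero

end Alternating

lemma ncard_isAlt_and_det_ne_zero :
    {A : Matrix (Fin 4) (Fin 4) F2 | (toBilin' A).IsAlt ∧ A.det ≠ 0}.ncard = 28 := by
  have image_eq : {A : Matrix (Fin 4) (Fin 4) F2 | (toBilin' A).IsAlt ∧ A.det ≠ 0} =
      altMatrix '' ({p | pfaffian p ≠ 0} : Finset (Fin 6 → F2)) := by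
    ext A
    simp only [Set.mem_image, isAlt_toBilin'_iff]
    constructor
    · rintro ⟨hA, hdet⟩
      refine ⟨_, ?_, hA⟩
      rw [← hA, det_altMatrix] at hdet
      simpa using hdet
    · rintro ⟨p, hp, rfl⟩
      refine ⟨rfl, ?_⟩
      rw [det_altMatrix]
      simpa using hp
  rw [image_eq, Set.ncard_image_of_injective _ altMatrix_injective, Set.ncard_coe_finset]
  decide

theorem setOf_smooth_vanishing_cubics :
    {f : MvPolynomial (Fin 4) F2 | IsSmoothCubic f ∧ ∀ v : Fin 4 → F2, eval v f = 0} =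
      frobeniusForm 2 '' {A | (toBilin' A).IsAlt ∧ A.det ≠ 0} := by
  ext f
  have vanishing (hf : f.IsHomogeneous 3) := forall_eval_eq_zero_iff (K := F2) hf
  have smooth (A) := frobeniusForm_smooth_iff (K := F2) Kbar (A : Matrix (Fin 4) (Fin 4) F2)
  rw [ZMod.card] at *
  constructor
  · rintro ⟨⟨hf, hs⟩, hv⟩
    obtain ⟨A, hA, rfl⟩ := (vanishing hf).mp hv
    exact ⟨A, ⟨hA, (smooth A).mp hs⟩, rfl⟩
  · rintro ⟨A, ⟨hA, hdet⟩, rfl⟩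
    have hf := isHomogeneous_frobeniusForm (q := 2) A
    exact ⟨⟨hf, (smooth A).mpr hdet⟩, (vanishing hf).mpr ⟨A, hA, rfl⟩⟩

lemma c0_eq_frobeniusForm : c0 = frobeniusForm 2 symplecticMatrix := by
  simp only [c0, frobeniusForm, dotProduct, mulVec, symplecticMatrix, altMatrix, cons_val_zero,
    cons_val_one, cons_val, neg_zero, ZMod.neg_eq_self_mod_two, map_apply, of_apply, cons_val',
    cons_val_fin_one, Pi.pow_apply, Fin.sum_univ_four, C_0, zero_mul, add_zero, C_1, one_mul,
    zero_add]
  ring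

theorem setOf_orbit_c0 :
    {f : MvPolynomial (Fin 4) F2 |
      ∃ g : GL (Fin 4) F2, act (g : Matrix (Fin 4) (Fin 4) F2) c0 = f} =
      frobeniusForm 2 '' {A | (toBilin' A).IsAlt ∧ A.det ≠ 0} := by
  have act_frobeniusForm (g A : Matrix (Fin 4) (Fin 4) F2) :
      act g (frobeniusForm 2 A) = frobeniusForm 2 (gᵀ * A * g) :=
    aeval_mulVec_X_frobeniusForm g A
  ext f
  simp only [c0_eq_frobeniusForm, act_frobeniusForm, isAlt_and_det_ne_zero_iff, Set.mem_image]
  simp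

/-- there are exactly `28` smooth cubic forms over `𝔽₂` vanishing at every
point of `𝔽₂⁴`; equivalently, the `GL₄(𝔽₂)`-orbit of `c₀` consists of exactly `28` cubic
forms. -/
theorem card_smooth_vanishing_cubics :
    {f : MvPolynomial (Fin 4) F2 |
      IsSmoothCubic f ∧ ∀ v : Fin 4 → F2, eval v f = 0}.ncard = 28 ∧
    {f : MvPolynomial (Fin 4) F2 |
      ∃ g : GL (Fin 4) F2, act (g : Matrix (Fin 4) (Fin 4) F2) c0 = f}.ncard = 28 := by
  have card_image := (Set.ncard_image_of_injective _ (frobeniusForm_injective one_lt_two)).trans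
    ncard_isAlt_and_det_ne_zero
  rw [setOf_smooth_vanishing_cubics, setOf_orbit_c0]
  exact ⟨card_image, card_image⟩
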